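/- Normal form of the operator E_{s,t} for V = ℝ^{p,q} (content of Proposition 8.3): Let s, t ∈ ℂ. For every smooth complex-valued function f on ℝⁿ×ℝⁿ, the following identity holds pointwise on ℝⁿ×ℝⁿ: −P(∂/∂x)P(∂/∂y)[ P(x−y)·f ] + 4s·P(∂/∂y)[ Σ_{i=1}^{n} ∂/∂xᵢ( (xᵢ−yᵢ)·f ) ] + 4t·P(∂/∂x)[ Σ_{i=1}^{n} ∂/∂yᵢ( (yᵢ−xᵢ)·f ) ] − 2t(2t−2+n)·P(∂/∂x)f + 8st·P(∂/∂x, ∂/∂y)f − 2s(2s−2+n)·P(∂/∂y)f = −P(x−y)·P(∂/∂x)P(∂/∂y)f + 4(s−1)·Σ_{j=1}^{n} (xⱼ−yⱼ)·∂/∂xⱼ( P(∂/∂y)f ) + 4(t−1)·Σ_{j=1}^{n} (yⱼ−xⱼ)·∂/∂yⱼ( P(∂/∂x)f ) − 2(s−1)(2s−n)·P(∂/∂y)f + 8(s−1)(t−1)·P(∂/∂x, ∂/∂y)f − 2(t−1)(2t−n)·P(∂/∂x)f. -/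

import Mathlib

noncomputable section

/-- `εᵢ`: the sign of the `i`-th coordinate for the quadratic form of signature `(p,q)`. -/
def sgn (p : ℕ) {n : ℕ} (i : Fin n) : ℝ := if (i : ℕ) < p then 1 else -1

/-- The quadratic form `P(x) = x₁²+⋯+x_p² − x_{p+1}²−⋯−x_n²` on `ℝⁿ`, `n = p+q`. -/
def Pform (p : ℕ) {n : ℕ} (x : Fin n → ℝ) : ℝ := ∑ i, sgn p i * x i ^ 2

/-- The associated symmetric bilinear form `P(x,y) = Σ_{i≤p} xᵢyᵢ − Σ_{i>p} xᵢyᵢ`. -/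
def Pbil (p : ℕ) {n : ℕ} (x y : Fin n → ℝ) : ℝ := ∑ i, sgn p i * x i * y i

/-- Signed power `t^{s,ε}`: `t^{s,+} = |t|^s = exp(s·log|t|)` and `t^{s,−} = sign(t)·|t|^s`. -/
def sPow (ε : Bool) (s : ℂ) (t : ℝ) : ℂ :=
  (if ε then 1 else (Real.sign t : ℂ)) * Complex.exp (s * (Real.log |t| : ℂ))

/-- Partial derivative `∂/∂xᵢ` (first variable) of a function on `ℝⁿ×ℝⁿ`. -/
def pdx {n : ℕ} (i : Fin n) (f : (Fin n → ℝ) × (Fin n → ℝ) → ℂ) :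
    (Fin n → ℝ) × (Fin n → ℝ) → ℂ :=
  fun z => fderiv ℝ f z (Pi.single i 1, 0)

/-- Partial derivative `∂/∂yᵢ` (second variable) of a function on `ℝⁿ×ℝⁿ`. -/
def pdy {n : ℕ} (i : Fin n) (f : (Fin n → ℝ) × (Fin n → ℝ) → ℂ) :
    (Fin n → ℝ) × (Fin n → ℝ) → ℂ :=
  fun z => fderiv ℝ f z (0, Pi.single i 1)

/-- `P(∂/∂x) = Σᵢ εᵢ ∂²/∂xᵢ²`. -/
def Px (p : ℕ) {n : ℕ} (f : (Fin n → ℝ) × (Fin n → ℝ) → ℂ) :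
    (Fin n → ℝ) × (Fin n → ℝ) → ℂ :=
  fun z => ∑ i, (sgn p i : ℂ) * pdx i (pdx i f) z

/-- `P(∂/∂y) = Σᵢ εᵢ ∂²/∂yᵢ²`. -/
def Py (p : ℕ) {n : ℕ} (f : (Fin n → ℝ) × (Fin n → ℝ) → ℂ) :
    (Fin n → ℝ) × (Fin n → ℝ) → ℂ :=
  fun z => ∑ i, (sgn p i : ℂ) * pdy i (pdy i f) z

/-- `P(∂/∂x, ∂/∂y) = Σᵢ εᵢ ∂²/∂xᵢ∂yᵢ`. -/
def Pxy (p : ℕ) {n : ℕ} (f : (Fin n → ℝ) × (Fin n → ℝ) → ℂ) :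
    (Fin n → ℝ) × (Fin n → ℝ) → ℂ :=
  fun z => ∑ i, (sgn p i : ℂ) * pdx i (pdy i f) z

/-!
The identity holds in any algebra containing mutually commuting families `Xᵢ`, `Yⱼ` and a family
`Uⱼ` with `[Xᵢ, Uⱼ] = δᵢⱼ = -[Yᵢ, Uⱼ]`; here these are `∂/∂xᵢ`, `∂/∂yᵢ` and multiplication by
`xⱼ - yⱼ` on smooth functions. For `L(X) = Σ εᵢ Xᵢ²` the commutation relations give
`[L(X), Uⱼ] = 2 εⱼ Xⱼ`, hence `[L(X), Σ εⱼ Uⱼ²] = 4 Σ Uⱼ Xⱼ + 2n` and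
`[L(X), Σ Uⱼ Yⱼ] = 2 Σ εⱼ Xⱼ Yⱼ`. The same formulas hold for the pair `(Y, -U)`, and `Σ εⱼ Uⱼ²` is
unchanged under `U ↦ -U`. Moving all the `Uⱼ` to the left then leaves a comparison of coefficients.
-/

section CanonicalPairs

variable {ι R A : Type*} [CommRing R] [Ring A] [Algebra R A]

/-- The diagonal bilinear form `Σᵢ εᵢ aᵢ bᵢ` with coefficients `ε`, evaluated on two families in a
possibly noncommutative algebra. It encodes at once the multiplication by a quadratic form and the
second-order operators with the same symbol. -/
def diagForm [Fintype ι] (ε : ι → R) (a b : ι → A) : A :=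
  ∑ i, ε i • (a i * b i)

/-- The Euler operator `Σᵢ Uᵢ Dᵢ`, with the coordinates `U` to the left of the derivatives `D`. -/
def eulerOp [Fintype ι] (U D : ι → A) : A :=
  ∑ i, U i * D i

/-- The canonical commutation relations `[Dᵢ, Uⱼ] = δᵢⱼ` between two families in a ring, satisfied
by the partial derivatives and the multiplications by the coordinates. No commutation is required
within either family. -/
def IsCanonicalPair [DecidableEq ι] (D U : ι → A) : Prop :=
  ∀ i j, ⁅D i, U j⁆ = if i = j then 1 else 0

section Forms

variable [Fintype ι]

theorem diagForm_neg_neg (ε : ι → R) (a b : ι → A) : diagForm ε (-a) (-b) = diagForm ε a b := by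
  simp only [diagForm, Pi.neg_apply, neg_mul_neg]

theorem diagForm_comm (ε : ι → R) {a b : ι → A} (hab : ∀ i, Commute (a i) (b i)) :
    diagForm ε a b = diagForm ε b a :=
  Finset.sum_congr rfl fun i _ => by rw [(hab i).eq]

theorem commute_diagForm_self (ε : ι → R) {a : ι → A} {b : A} (hab : ∀ i, Commute (a i) b) :
    Commute (diagForm ε a a) b :=
  Commute.sum_left _ _ _ fun i _ => ((hab i).mul_left (hab i)).smul_left (ε i)

theorem eulerOp_neg_left (U D : ι → A) : eulerOp (-U) D = -eulerOp U D := by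
  simp only [eulerOp, Pi.neg_apply, neg_mul, Finset.sum_neg_distrib]

end Forms

namespace IsCanonicalPair

variable [DecidableEq ι] {D U : ι → A}

theorem mul_eq (h : IsCanonicalPair D U) (i j : ι) :
    D i * U j = U j * D i + if i = j then 1 else 0 := by
  rw [← h i j, Ring.lie_def, add_sub_cancel]

theorem mul_self_eq (h : IsCanonicalPair D U) (i : ι) : D i * U i = U i * D i + 1 := by
  rw [h.mul_eq, if_pos rfl]

theorem sq_mul (h : IsCanonicalPair D U) (i j : ι) :
    D i * D i * U j = U j * (D i * D i) + if i = j then 2 • D j else 0 := by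
  rw [mul_assoc, h.mul_eq, mul_add, ← mul_assoc, h.mul_eq]
  split_ifs with hij
  · subst hij
    noncomm_ring
  · noncomm_ring

variable [Fintype ι]

theorem sum_mul_eq (h : IsCanonicalPair D U) :
    ∑ i, D i * U i = eulerOp U D + Fintype.card ι • 1 := by
  simp only [h.mul_self_eq, Finset.sum_add_distrib, eulerOp, Finset.sum_const, Finset.card_univ]

theorem diagForm_mul (h : IsCanonicalPair D U) (ε : ι → R) (j : ι) :
    diagForm ε D D * U j = U j * diagForm ε D D + 2 • ε j • D j := by
  simp only [diagForm, Finset.sum_mul, Finset.mul_sum, smul_mul_assoc, mul_smul_comm, h.sq_mul,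
    smul_add, Finset.sum_add_distrib, smul_ite, smul_zero, Finset.sum_ite_eq', Finset.mem_univ,
    if_true, smul_comm (ε j) 2]

theorem diagForm_mul_eulerOp (h : IsCanonicalPair D U) (ε : ι → R) {B : ι → A}
    (hDB : ∀ i j, Commute (D i) (B j)) :
    diagForm ε D D * eulerOp U B = eulerOp U B * diagForm ε D D + 2 • diagForm ε D B := by
  have hterm (j : ι) : diagForm ε D D * (U j * B j) =
      U j * B j * diagForm ε D D + 2 • ε j • (D j * B j) := by
    have hcomm : diagForm ε D D * B j = B j * diagForm ε D D :=
      commute_diagForm_self ε fun i => hDB i j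
    rw [← mul_assoc, h.diagForm_mul, add_mul, mul_assoc, hcomm, ← mul_assoc, smul_mul_assoc,
      smul_mul_assoc]
  simp only [eulerOp, Finset.mul_sum, hterm, Finset.sum_add_distrib]
  rw [← Finset.sum_mul, ← Finset.smul_sum, ← diagForm]

theorem diagForm_mul_diagForm (h : IsCanonicalPair D U) {ε : ι → R} (hε : ∀ i, ε i * ε i = 1) :
    diagForm ε D D * diagForm ε U U =
      diagForm ε U U * diagForm ε D D + 4 • eulerOp U D + (2 * Fintype.card ι) • 1 := by
  have hterm (j : ι) : diagForm ε D D * (ε j • (U j * U j)) =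
      ε j • (U j * U j) * diagForm ε D D + (4 • (U j * D j) + 2 • 1) := by
    have hsq : diagForm ε D D * (U j * U j) =
        U j * U j * diagForm ε D D + ε j • (4 • (U j * D j) + 2 • 1) := by
      rw [← mul_assoc, h.diagForm_mul, add_mul, mul_assoc, h.diagForm_mul, smul_mul_assoc,
        smul_mul_assoc, h.mul_self_eq, mul_add, mul_smul_comm, mul_smul_comm, mul_assoc]
      module
    rw [mul_smul_comm, hsq, smul_add, smul_smul, hε, one_smul, smul_mul_assoc]
  calc diagForm ε D D * diagForm ε U U
      = ∑ j, (ε j • (U j * U j) * diagForm ε D D + (4 • (U j * D j) + 2 • 1)) := by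
        rw [diagForm.eq_def ε U U, Finset.mul_sum]
        exact Finset.sum_congr rfl fun j _ => hterm j
    _ = diagForm ε U U * diagForm ε D D + 4 • eulerOp U D + (2 * Fintype.card ι) • 1 := by
        simp only [Finset.sum_add_distrib, ← Finset.sum_mul, ← Finset.smul_sum, ← diagForm.eq_def,
          ← eulerOp.eq_def, Finset.sum_const, Finset.card_univ]
        module

end IsCanonicalPair

variable [Fintype ι] [DecidableEq ι] {X Y U : ι → A} {ε : ι → R}

theorem diagForm_mul_diagForm_mul_diagForm (hX : IsCanonicalPair X U) (hY : IsCanonicalPair Y (-U))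
    (hXY : ∀ i j, Commute (X i) (Y j)) (hε : ∀ i, ε i * ε i = 1) :
    diagForm ε X X * (diagForm ε Y Y * diagForm ε U U) =
      diagForm ε U U * (diagForm ε X X * diagForm ε Y Y) + 4 • (eulerOp U X * diagForm ε Y Y)
        + 4 • (eulerOp (-U) Y * diagForm ε X X) - 8 • diagForm ε X Y
        + (2 * Fintype.card ι) • (diagForm ε X X + diagForm ε Y Y) := by
  have hYU : diagForm ε Y Y * diagForm ε U U =
      diagForm ε U U * diagForm ε Y Y - 4 • eulerOp U Y + (2 * Fintype.card ι) • 1 := by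
    rw [← diagForm_neg_neg ε U U, hY.diagForm_mul_diagForm hε, eulerOp_neg_left, smul_neg,
      ← sub_eq_add_neg]
  rw [hYU, mul_add, mul_sub, ← mul_assoc, hX.diagForm_mul_diagForm hε, mul_smul_comm,
    hX.diagForm_mul_eulerOp ε hXY, mul_smul_comm, mul_one, add_mul, add_mul, smul_mul_assoc,
    smul_mul_assoc, one_mul, mul_assoc, eulerOp_neg_left, neg_mul]
  module

theorem diagForm_mul_sum (hX : IsCanonicalPair X U) (hY : IsCanonicalPair Y (-U))
    (hXY : ∀ i j, Commute (X i) (Y j)) (ε : ι → R) :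
    diagForm ε Y Y * ∑ i, X i * U i =
      eulerOp U X * diagForm ε Y Y - 2 • diagForm ε X Y + Fintype.card ι • diagForm ε Y Y := by
  have hYX : diagForm ε Y Y * eulerOp U X = eulerOp U X * diagForm ε Y Y - 2 • diagForm ε X Y := by
    rw [← neg_neg U, eulerOp_neg_left, mul_neg, hY.diagForm_mul_eulerOp ε fun i j => (hXY j i).symm,
      diagForm_comm ε fun i => (hXY i i).symm]
    noncomm_ring
  rw [hX.sum_mul_eq, mul_add, hYX, mul_smul_comm, mul_one]

theorem normal_form_Est_Rpq_general (hX : IsCanonicalPair X U) (hY : IsCanonicalPair Y (-U))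
    (hXY : ∀ i j, Commute (X i) (Y j)) (hε : ∀ i, ε i * ε i = 1) (s t : R) :
    -(diagForm ε X X * (diagForm ε Y Y * diagForm ε U U))
      + (4 * s) • (diagForm ε Y Y * ∑ i, X i * U i)
      + (4 * t) • (diagForm ε X X * ∑ i, Y i * (-U) i)
      - (2 * t * (2 * t - 2 + Fintype.card ι)) • diagForm ε X X
      + (8 * s * t) • diagForm ε X Y
      - (2 * s * (2 * s - 2 + Fintype.card ι)) • diagForm ε Y Y
    =
    -(diagForm ε U U * (diagForm ε X X * diagForm ε Y Y))
      + (4 * (s - 1)) • (eulerOp U X * diagForm ε Y Y)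
      + (4 * (t - 1)) • (eulerOp (-U) Y * diagForm ε X X)
      - (2 * (s - 1) * (2 * s - Fintype.card ι)) • diagForm ε Y Y
      + (8 * (s - 1) * (t - 1)) • diagForm ε X Y
      - (2 * (t - 1) * (2 * t - Fintype.card ι)) • diagForm ε X X := by
  have hX' : IsCanonicalPair X (-(-U)) := by rwa [neg_neg]
  rw [diagForm_mul_diagForm_mul_diagForm hX hY hXY hε, diagForm_mul_sum hX hY hXY,
    diagForm_mul_sum hY hX' (fun i j => (hXY j i).symm), diagForm_comm ε fun i => (hXY i i).symm]
  module

end CanonicalPairs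

section Derivations

variable {ι R S : Type*} [DecidableEq ι] [CommRing R] [CommRing S] [Algebra R S]

theorem lie_derivation_lmul (d : Derivation R S S) (u : S) :
    ⁅(d : Module.End R S), Algebra.lmul R S u⁆ = Algebra.lmul R S (d u) := by
  ext f
  simp [Ring.lie_def, mul_comm]

theorem isCanonicalPair_derivation_lmul {d : ι → Derivation R S S} {u : ι → S}
    (hdu : ∀ i j, d i (u j) = if i = j then 1 else 0) :
    IsCanonicalPair (fun i => (d i : Module.End R S)) fun j => Algebra.lmul R S (u j) := by
  intro i j
  rw [lie_derivation_lmul, hdu, apply_ite (Algebra.lmul R S), map_one, map_zero]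

end Derivations

section SmoothFunctions

open scoped ContDiff

/-- The algebra of smooth complex-valued functions on a real normed space, on which differential
operators with smooth coefficients act as endomorphisms. -/
def smoothFunctions (E : Type*) [NormedAddCommGroup E] [NormedSpace ℝ E] :
    Subalgebra ℂ (E → ℂ) where
  carrier := {f | ContDiff ℝ ∞ f}
  mul_mem' {f g} (hf : ContDiff ℝ ∞ f) (hg : ContDiff ℝ ∞ g) := hf.mul hg
  add_mem' {f g} (hf : ContDiff ℝ ∞ f) (hg : ContDiff ℝ ∞ g) := hf.add hg
  algebraMap_mem' c := (contDiff_const : ContDiff ℝ ∞ fun _ : E => c)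

namespace smoothFunctions

variable {E : Type*} [NormedAddCommGroup E] [NormedSpace ℝ E]

theorem contDiff_coe (f : smoothFunctions E) : ContDiff ℝ ∞ (f : E → ℂ) :=
  f.2

theorem differentiable_coe (f : smoothFunctions E) : Differentiable ℝ (f : E → ℂ) :=
  (contDiff_coe f).differentiable (by simp)

theorem contDiff_fderiv (f : smoothFunctions E) : ContDiff ℝ ∞ (fderiv ℝ (f : E → ℂ)) :=
  (contDiff_coe f).fderiv_right (by simp)

theorem contDiff_fderiv_apply (f : smoothFunctions E) (v : E) :
    ContDiff ℝ ∞ fun z => fderiv ℝ (f : E → ℂ) z v :=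
  (contDiff_fderiv f).clm_apply contDiff_const

/-- The derivative in the direction `v`, as a derivation of the algebra of smooth functions. -/
def dirDeriv (v : E) : Derivation ℂ (smoothFunctions E) (smoothFunctions E) :=
  Derivation.mk'
    { toFun f := ⟨fun z => fderiv ℝ (f : E → ℂ) z v, contDiff_fderiv_apply f v⟩
      map_add' f g := by
        ext z
        simp [fderiv_add (differentiable_coe f z) (differentiable_coe g z)]
      map_smul' c f := by
        ext z
        simp [fderiv_const_smul (differentiable_coe f z)] }
    fun f g => by
      ext z
      simp [fderiv_mul (differentiable_coe f z) (differentiable_coe g z)]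

theorem coe_dirDeriv (v : E) (f : smoothFunctions E) :
    (dirDeriv v f : E → ℂ) = fun z => fderiv ℝ f z v :=
  rfl

theorem dirDeriv_comm (v w : E) (f : smoothFunctions E) :
    dirDeriv v (dirDeriv w f) = dirDeriv w (dirDeriv v f) := by
  ext z
  have hf' : DifferentiableAt ℝ (fderiv ℝ (f : E → ℂ)) z :=
    (contDiff_fderiv f).differentiable (by simp) z
  have hsnd (a b : E) : (dirDeriv a (dirDeriv b f) : E → ℂ) z =
      fderiv ℝ (fderiv ℝ (f : E → ℂ)) z a b := by
    simp [coe_dirDeriv, fderiv_clm_apply hf' (differentiableAt_const b)]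
  have hsymm : IsSymmSndFDerivAt ℝ (f : E → ℂ) z :=
    (contDiff_coe f).contDiffAt.isSymmSndFDerivAt <| by
      rw [minSmoothness_of_isRCLikeNormedField]
      exact WithTop.coe_le_coe.2 (le_top : (2 : ℕ∞) ≤ ⊤)
  rw [hsnd, hsnd, hsymm.eq]

theorem commute_dirDeriv (v w : E) :
    Commute (dirDeriv v : Module.End ℂ (smoothFunctions E)) (dirDeriv w) :=
  LinearMap.ext (dirDeriv_comm v w)

/-- A continuous linear form, as a smooth function. -/
def ofCLM (ℓ : E →L[ℝ] ℂ) : smoothFunctions E :=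
  ⟨ℓ, (ℓ.contDiff : ContDiff ℝ ∞ ℓ)⟩

theorem dirDeriv_ofCLM (v : E) (ℓ : E →L[ℝ] ℂ) :
    dirDeriv v (ofCLM ℓ) = algebraMap ℂ (smoothFunctions E) (ℓ v) := by
  ext z
  exact congrArg (fun T : E →L[ℝ] ℂ => T v) ℓ.fderiv

/-- The linear functional `T ↦ (T f)(z)` on operators, through which an identity between operators
becomes a pointwise identity. -/
def applyEval (f : smoothFunctions E) (z : E) : Module.End ℂ (smoothFunctions E) →ₗ[ℂ] ℂ :=
  LinearMap.proj z ∘ₗ (smoothFunctions E).val.toLinearMap ∘ₗ LinearMap.applyₗ f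

theorem applyEval_apply (f : smoothFunctions E) (z : E) (T : Module.End ℂ (smoothFunctions E)) :
    applyEval f z T = (T f : E → ℂ) z :=
  rfl

theorem coe_sum_mul_apply {ι : Type*} [Fintype ι] (S T : ι → Module.End ℂ (smoothFunctions E))
    (f : smoothFunctions E) :
    ((∑ i, S i * T i) f : E → ℂ) = fun z => ∑ i, (S i (T i f) : E → ℂ) z := by
  ext z
  simp only [← applyEval_apply, map_sum]
  rfl

theorem coe_diagForm_apply {ι : Type*} [Fintype ι] (ε : ι → ℂ)
    (S T : ι → Module.End ℂ (smoothFunctions E)) (f : smoothFunctions E) :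
    (diagForm ε S T f : E → ℂ) = fun z => ∑ i, ε i * (S i (T i f) : E → ℂ) z := by
  ext z
  simp only [← applyEval_apply, diagForm, map_sum, map_smul]
  rfl

end smoothFunctions

end SmoothFunctions

section Operators

open smoothFunctions

/-- The space `ℝⁿ × ℝⁿ` of pairs `(x, y)`. -/
abbrev PairSpace (n : ℕ) : Type :=
  (Fin n → ℝ) × (Fin n → ℝ)

variable {n : ℕ}

-- Found by unification these two instances are slow enough to exhaust the synthesis budget.
instance : Ring (Module.End ℂ (smoothFunctions (PairSpace n))) := inferInstance

instance : Algebra ℂ (Module.End ℂ (smoothFunctions (PairSpace n))) := inferInstance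

/-- The linear form `xⱼ - yⱼ`, with values in `ℂ`. -/
def diffCoord (j : Fin n) : PairSpace n →L[ℝ] ℂ :=
  Complex.ofRealCLM ∘L ContinuousLinearMap.proj j ∘L
    (ContinuousLinearMap.fst ℝ _ _ - ContinuousLinearMap.snd ℝ _ _)

theorem diffCoord_apply (j : Fin n) (w : PairSpace n) :
    diffCoord j w = ((w.1 j - w.2 j : ℝ) : ℂ) :=
  rfl

theorem diffCoord_single_left (i j : Fin n) :
    diffCoord j (Pi.single i 1, 0) = if i = j then 1 else 0 := by
  by_cases hij : i = j <;> simp [diffCoord_apply, hij, Ne.symm]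

theorem diffCoord_single_right (i j : Fin n) :
    diffCoord j (0, Pi.single i 1) = -if i = j then 1 else 0 := by
  by_cases hij : i = j <;> simp [diffCoord_apply, hij, Ne.symm]

/-- `∂/∂xᵢ` as an operator on smooth functions. -/
def partialX (i : Fin n) : Module.End ℂ (smoothFunctions (PairSpace n)) :=
  (dirDeriv ((Pi.single i 1, 0) : PairSpace n)).toLinearMap

/-- `∂/∂yᵢ` as an operator on smooth functions. -/
def partialY (i : Fin n) : Module.End ℂ (smoothFunctions (PairSpace n)) :=
  (dirDeriv ((0, Pi.single i 1) : PairSpace n)).toLinearMap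

/-- Multiplication by `xⱼ - yⱼ` as an operator on smooth functions. -/
def mulDiff (j : Fin n) : Module.End ℂ (smoothFunctions (PairSpace n)) :=
  Algebra.lmul ℂ _ (ofCLM (diffCoord j))

theorem isCanonicalPair_partialX_mulDiff : IsCanonicalPair (partialX (n := n)) mulDiff := by
  refine isCanonicalPair_derivation_lmul fun i j => ?_
  rw [dirDeriv_ofCLM, diffCoord_single_left, apply_ite (algebraMap _ _), map_one, map_zero]

theorem isCanonicalPair_partialY_neg_mulDiff : IsCanonicalPair (partialY (n := n)) (-mulDiff) := by
  have hneg : -mulDiff (n := n) = fun j => Algebra.lmul ℂ _ (-ofCLM (diffCoord j)) :=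
    funext fun j => (map_neg (Algebra.lmul ℂ _) (ofCLM (diffCoord j))).symm
  rw [hneg]
  refine isCanonicalPair_derivation_lmul fun i j => ?_
  rw [map_neg, dirDeriv_ofCLM, diffCoord_single_right, map_neg, neg_neg,
    apply_ite (algebraMap _ _), map_one, map_zero]

theorem commute_partialX_partialY (i j : Fin n) : Commute (partialX i) (partialY j) :=
  commute_dirDeriv _ _

theorem sgn_mul_self (p : ℕ) (i : Fin n) : (sgn p i : ℂ) * sgn p i = 1 := by
  unfold sgn
  split_ifs <;> simp

variable (p : ℕ) (f : smoothFunctions (PairSpace n))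

theorem coe_partialX (i : Fin n) : (partialX i f : PairSpace n → ℂ) = pdx i f :=
  rfl

theorem coe_partialY (i : Fin n) : (partialY i f : PairSpace n → ℂ) = pdy i f :=
  rfl

theorem coe_mulDiff (j : Fin n) :
    (mulDiff j f : PairSpace n → ℂ) =
      fun w => ((w.1 j - w.2 j : ℝ) : ℂ) * (f : PairSpace n → ℂ) w :=
  rfl

theorem coe_neg_mulDiff (j : Fin n) :
    ((-mulDiff) j f : PairSpace n → ℂ) =
      fun w => ((w.2 j - w.1 j : ℝ) : ℂ) * (f : PairSpace n → ℂ) w := by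
  ext w
  rw [← neg_sub, Complex.ofReal_neg, neg_mul]
  rfl

theorem coe_diagForm_partialX :
    (diagForm (fun i => (sgn p i : ℂ)) partialX partialX f : PairSpace n → ℂ) = Px p f :=
  coe_diagForm_apply _ _ _ f

theorem coe_diagForm_partialY :
    (diagForm (fun i => (sgn p i : ℂ)) partialY partialY f : PairSpace n → ℂ) = Py p f :=
  coe_diagForm_apply _ _ _ f

theorem coe_diagForm_partialX_partialY :
    (diagForm (fun i => (sgn p i : ℂ)) partialX partialY f : PairSpace n → ℂ) = Pxy p f :=
  coe_diagForm_apply _ _ _ f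

theorem coe_diagForm_mulDiff :
    (diagForm (fun i => (sgn p i : ℂ)) mulDiff mulDiff f : PairSpace n → ℂ) =
      fun w => (Pform p (w.1 - w.2) : ℂ) * (f : PairSpace n → ℂ) w := by
  rw [coe_diagForm_apply]
  ext w
  simp only [coe_mulDiff, Pform, Complex.ofReal_sum, Finset.sum_mul]
  refine Finset.sum_congr rfl fun i _ => ?_
  simp only [Pi.sub_apply, Complex.ofReal_mul, Complex.ofReal_pow]
  ring

end Operators

/-- Normal form of the operator `E_{s,t}` for `V = ℝ^{p,q}` (Proposition 8.3). -/
theorem normal_form_Est_Rpq (p q : ℕ) (hp : 1 ≤ p) (n : ℕ) (hn : n = p + q)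
    (s t : ℂ) (f : (Fin n → ℝ) × (Fin n → ℝ) → ℂ) (hf : ContDiff ℝ (⊤ : ℕ∞) f)
    (z : (Fin n → ℝ) × (Fin n → ℝ)) :
    -(Px p (Py p (fun w => (Pform p (w.1 - w.2) : ℂ) * f w)) z)
      + 4 * s * Py p (fun w => ∑ i, pdx i (fun u => ((u.1 i - u.2 i : ℝ) : ℂ) * f u) w) z
      + 4 * t * Px p (fun w => ∑ i, pdy i (fun u => ((u.2 i - u.1 i : ℝ) : ℂ) * f u) w) z
      - 2 * t * (2 * t - 2 + (n : ℂ)) * Px p f z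
      + 8 * s * t * Pxy p f z
      - 2 * s * (2 * s - 2 + (n : ℂ)) * Py p f z
    =
    -((Pform p (z.1 - z.2) : ℂ) * Px p (Py p f) z)
      + 4 * (s - 1) * ∑ j, ((z.1 j - z.2 j : ℝ) : ℂ) * pdx j (Py p f) z
      + 4 * (t - 1) * ∑ j, ((z.2 j - z.1 j : ℝ) : ℂ) * pdy j (Px p f) z
      - 2 * (s - 1) * (2 * s - (n : ℂ)) * Py p f z
      + 8 * (s - 1) * (t - 1) * Pxy p f z
      - 2 * (t - 1) * (2 * t - (n : ℂ)) * Px p f z := by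
  simpa only [map_add, map_sub, map_neg, map_smul, smul_eq_mul, smoothFunctions.applyEval_apply,
    Module.End.mul_apply, eulerOp, smoothFunctions.coe_sum_mul_apply, coe_diagForm_partialX,
    coe_diagForm_partialY, coe_diagForm_partialX_partialY, coe_diagForm_mulDiff, coe_partialX,
    coe_partialY, coe_mulDiff, coe_neg_mulDiff, Fintype.card_fin]
    using congrArg (smoothFunctions.applyEval ⟨f, hf⟩ z)
      (normal_form_Est_Rpq_general isCanonicalPair_partialX_mulDiff
        isCanonicalPair_partialY_neg_mulDiff commute_partialX_partialY (sgn_mul_self p) s t)
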